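/- Let G be a finite simple graph that is 2P4-free, and let v1,…,v7 induce a C7 in G with vertex set N0. Let R be the set of all vertices x outside N0 with N0(x) = {v1, v3}, and let N2 be the set of vertices outside N0 with no neighbor in N0. Then the subgraph of G induced by R∪N2 is P4-free. -/

import Mathlib

/-- `a b c d` form an induced path on four vertices in `G`. -/
def IsInducedP4 {V : Type*} (G : SimpleGraph V) (a b c d : V) : Prop :=
  a ≠ b ∧ a ≠ c ∧ a ≠ d ∧ b ≠ c ∧ b ≠ d ∧ c ≠ d ∧
  G.Adj a b ∧ G.Adj b c ∧ G.Adj c d ∧ ¬ G.Adj a c ∧ ¬ G.Adj a d ∧ ¬ G.Adj b d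

/-- `G` is `2P₄`-free. -/
def TwoP4Free {V : Type*} (G : SimpleGraph V) : Prop :=
  ¬ ∃ a₁ a₂ a₃ a₄ b₁ b₂ b₃ b₄ : V,
      IsInducedP4 G a₁ a₂ a₃ a₄ ∧ IsInducedP4 G b₁ b₂ b₃ b₄ ∧
      ∀ u ∈ ({a₁, a₂, a₃, a₄} : Set V), ∀ w ∈ ({b₁, b₂, b₃, b₄} : Set V),
        u ≠ w ∧ ¬ G.Adj u w

/-- The vertices `v 0, …, v (n-1)` form an induced cycle `C_n` in `G`. -/
def IsInducedCycle {V : Type*} (G : SimpleGraph V) (n : ℕ) (v : ZMod n → V) : Prop :=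
  Function.Injective v ∧ ∀ i j : ZMod n, G.Adj (v i) (v j) ↔ (j = i + 1 ∨ i = j + 1)

/-! The four vertices `v 4, v 5, v 6, v 0` of the cycle left over by `v 1, v 2, v 3` induce a `P₄`
that no vertex of `R ∪ N2` meets or is adjacent to. An induced `P₄` inside `R ∪ N2` would therefore
complete it to an induced `2P₄`. -/

section

open Set

variable {V ι : Type*} {G : SimpleGraph V}

/-- The vertex sets `A` and `B` are disjoint and no edge of `G` joins them; in this form the last
clause of `TwoP4Free` says that the two paths are anticomplete to each other. -/
def Anticomplete (G : SimpleGraph V) (A B : Set V) : Prop :=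
  ∀ a ∈ A, ∀ b ∈ B, a ≠ b ∧ ¬ G.Adj a b

/-- The subgraph of `G` induced by `S` is `P₄`-free, expressed by vertices of `G` so as to avoid
the subtype of `S`. -/
def P4FreeOn (G : SimpleGraph V) (S : Set V) : Prop :=
  ∀ a b c d : V, a ∈ S → b ∈ S → c ∈ S → d ∈ S → ¬ IsInducedP4 G a b c d

/-- The vertices outside the family `v` with no neighbor among the `v i`, `i ∈ A`. When `v`
enumerates a cycle, `A = univ` gives the set `N2` of the vertices with no neighbor on it. -/
def outerNonneighbors (G : SimpleGraph V) (v : ι → V) (A : Set ι) : Set V :=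
  {x | x ∉ range v ∧ ∀ i ∈ A, ¬ G.Adj x (v i)}

theorem P4FreeOn.mono {S T : Set V} (hT : P4FreeOn G T) (hST : S ⊆ T) : P4FreeOn G S :=
  fun a b c d ha hb hc hd => hT a b c d (hST ha) (hST hb) (hST hc) (hST hd)

theorem TwoP4Free.p4FreeOn_of_anticomplete (hG : TwoP4Free G) {p q r s : V}
    (hpath : IsInducedP4 G p q r s) {S : Set V} (hS : Anticomplete G S {p, q, r, s}) :
    P4FreeOn G S := by
  intro a b c d ha hb hc hd habcd
  have hsub : {a, b, c, d} ⊆ S := by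
    simp only [insert_subset_iff, singleton_subset_iff, *, and_self]
  exact hG ⟨a, b, c, d, p, q, r, s, habcd, hpath, fun u hu => hS u (hsub hu)⟩

section outerNonneighbors

variable {v : ι → V} {A B : Set ι}

theorem anticomplete_outerNonneighbors_image :
    Anticomplete G (outerNonneighbors G v A) (v '' A) := by
  rintro x ⟨hx, hxA⟩ _ ⟨i, hi, rfl⟩
  exact ⟨fun h => hx ⟨i, h.symm⟩, hxA i hi⟩

theorem adj_iff_mem_of_neighbors_eq_image (hv : Function.Injective v) {x : V}
    (hx : {u | u ∈ range v ∧ G.Adj x u} = v '' B) (i : ι) : G.Adj x (v i) ↔ i ∈ B := by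
  rw [← hv.mem_set_image, ← hx, mem_ofPred_eq, and_iff_right (mem_range_self i)]

theorem setOf_neighbors_eq_image_subset_outerNonneighbors (hv : Function.Injective v)
    (hAB : Disjoint A B) :
    {x | x ∉ range v ∧ {u | u ∈ range v ∧ G.Adj x u} = v '' B} ⊆ outerNonneighbors G v A :=
  fun _ ⟨hx, hxB⟩ => ⟨hx, fun i hi hadj =>
    disjoint_left.mp hAB hi ((adj_iff_mem_of_neighbors_eq_image hv hxB i).mp hadj)⟩

theorem setOf_forall_not_adj_subset_outerNonneighbors :
    {x | x ∉ range v ∧ ∀ i, ¬ G.Adj x (v i)} ⊆ outerNonneighbors G v A :=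
  fun _ ⟨hx, hadj⟩ => ⟨hx, fun i _ => hadj i⟩

end outerNonneighbors

theorem natCast_zmod_inj_of_lt {n a b : ℕ} (ha : a < n) (hb : b < n) :
    (a : ZMod n) = b ↔ a = b := by
  rw [ZMod.natCast_eq_natCast_iff', Nat.mod_eq_of_lt ha, Nat.mod_eq_of_lt hb]

namespace IsInducedCycle

variable {n : ℕ} {v : ZMod n → V}

theorem apply_add_natCast_inj (hv : IsInducedCycle G n v) (i : ZMod n) {a b : ℕ}
    (ha : a < n) (hb : b < n) : v (i + a) = v (i + b) ↔ a = b := by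
  rw [hv.1.eq_iff, add_right_inj, natCast_zmod_inj_of_lt ha hb]

-- The bounds on `a + 1` and `b + 1` exclude the edge that closes the cycle.
theorem adj_add_natCast_iff (hv : IsInducedCycle G n v) (i : ZMod n) {a b : ℕ}
    (ha : a + 1 < n) (hb : b + 1 < n) :
    G.Adj (v (i + a)) (v (i + b)) ↔ b = a + 1 ∨ a = b + 1 := by
  rw [hv.2, add_assoc, add_assoc, add_right_inj, add_right_inj, ← Nat.cast_succ, ← Nat.cast_succ,
    natCast_zmod_inj_of_lt (by lia) ha, natCast_zmod_inj_of_lt (by lia) hb]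

theorem isInducedP4 (hv : IsInducedCycle G n v) (hn : 5 ≤ n) (i : ZMod n) :
    IsInducedP4 G (v i) (v (i + 1)) (v (i + 2)) (v (i + 3)) := by
  have hne {a b : ℕ} (ha : a < 4) (hb : b < 4) (hab : a ≠ b) : v (i + a) ≠ v (i + b) :=
    (hv.apply_add_natCast_inj i (by lia) (by lia)).not.mpr hab
  have hadj {a b : ℕ} (ha : a < 4) (hb : b < 4) :
      G.Adj (v (i + a)) (v (i + b)) ↔ b = a + 1 ∨ a = b + 1 :=
    hv.adj_add_natCast_iff i (by lia) (by lia)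
  have hpath : IsInducedP4 G (v (i + (0 : ℕ))) (v (i + (1 : ℕ))) (v (i + (2 : ℕ)))
      (v (i + (3 : ℕ))) := by
    simp [IsInducedP4, -Nat.cast_ofNat, -Nat.cast_zero, -Nat.cast_one, hne, hadj]
  simpa using hpath

end IsInducedCycle

theorem stmt5_general (hG : TwoP4Free G) {n : ℕ} (hn : 5 ≤ n) {v : ZMod n → V}
    (hv : IsInducedCycle G n v) (i : ZMod n) :
    P4FreeOn G (outerNonneighbors G v {i, i + 1, i + 2, i + 3}) := by
  refine hG.p4FreeOn_of_anticomplete (hv.isInducedP4 hn i) ?_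
  simpa only [image_insert_eq, image_singleton] using
    anticomplete_outerNonneighbors_image (G := G) (v := v) (A := {i, i + 1, i + 2, i + 3})

end

theorem stmt5 {V : Type*} [Fintype V] (G : SimpleGraph V) (h2P4 : TwoP4Free G)
    (v : ZMod 7 → V) (hv : IsInducedCycle G 7 v)
    (R : Set V)
    (hR : R = {x | x ∉ Set.range v ∧
      {u | u ∈ Set.range v ∧ G.Adj x u} = {v 1, v 3}})
    (N2 : Set V) (hN2 : N2 = {u | u ∉ Set.range v ∧ ∀ i, ¬ G.Adj u (v i)}) :
    ∀ a b c d : V, a ∈ R ∪ N2 → b ∈ R ∪ N2 → c ∈ R ∪ N2 → d ∈ R ∪ N2 →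
      ¬ IsInducedP4 G a b c d := by
  have hdisj : Disjoint ({4, 4 + 1, 4 + 2, 4 + 3} : Set (ZMod 7)) {1, 3} := by
    simp only [Set.disjoint_insert_right, Set.disjoint_singleton_right]
    decide
  rw [hR, hN2, ← Set.image_pair]
  exact (stmt5_general h2P4 (by norm_num) hv 4).mono <| Set.union_subset
    (setOf_neighbors_eq_image_subset_outerNonneighbors hv.1 hdisj)
    setOf_forall_not_adj_subset_outerNonneighbors
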